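/- For every uniformly continuous probability density ρ supported in the compact set W and every ε > 0, there exists a mixture density ρ_ε ∈ P_φ such that ‖ρ_ε − ρ‖_{L²(ℝ^d)} < ε. -/

import Mathlib

open MeasureTheory

/-- A density from the mixture class `P_φ`:
`ρ(w) = Σ_{i=1}^n α_i φ_{σ_i}(w − μ_i)` with `n ∈ ℕ+`, `μ_i ∈ ℝ^d`, `σ_i ∈ (0,1]` and
`α` in the probability simplex `Λ_n`. -/
def IsMixtureDensity {d : ℕ} (φ : EuclideanSpace ℝ (Fin d) → ℝ)
    (ρ : EuclideanSpace ℝ (Fin d) → ℝ) : Prop :=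
  ∃ n : ℕ, 0 < n ∧
    ∃ (α : Fin n → ℝ) (c : Fin n → EuclideanSpace ℝ (Fin d)) (σ : Fin n → ℝ),
      (∀ i, 0 ≤ α i) ∧ (∑ i, α i) = 1 ∧ (∀ i, 0 < σ i ∧ σ i ≤ 1) ∧
      ∀ w, ρ w = ∑ i, α i * ((σ i ^ d)⁻¹ * φ ((σ i)⁻¹ • (w - c i)))

lemma exists_measurable_net {E : Type*} [MetricSpace E] [MeasurableSpace E] [BorelSpace E]
    [TopologicalSpace.SeparableSpace E] [Nonempty E] {W : Set E} (hW : IsCompact W) {r : ℝ}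
    (hr : 0 < r) :
    ∃ n : ℕ, 0 < n ∧ ∃ (T : E → Fin n) (c : Fin n → E), Measurable T ∧
      ∀ y ∈ W, dist (c (T y)) y < r := by
  classical
  let e := TopologicalSpace.denseSeq E
  have hcov : W ⊆ ⋃ k, Metric.ball (e k) r := by
    intro y _
    obtain ⟨k, hk⟩ := (TopologicalSpace.denseRange_denseSeq E).exists_dist_lt y hr
    exact Set.mem_iUnion.2 ⟨k, hk⟩
  obtain ⟨t, ht⟩ := hW.elim_finite_subcover _ (fun k => Metric.isOpen_ball) hcov
  let N := t.sup id
  have hle : ∀ y, SimpleFunc.nearestPtInd e N y < N + 1 := fun y =>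
    Nat.lt_succ_of_le (SimpleFunc.nearestPtInd_le e N y)
  refine ⟨N + 1, Nat.succ_pos _, fun y => ⟨SimpleFunc.nearestPtInd e N y, hle y⟩,
    fun i => e i, ?_, ?_⟩
  · refine measurable_to_countable' fun i => ?_
    have : (fun y => (⟨SimpleFunc.nearestPtInd e N y, hle y⟩ : Fin (N + 1))) ⁻¹' {i}
        = (SimpleFunc.nearestPtInd e N) ⁻¹' {(i : ℕ)} := by
      ext y; simp [Fin.ext_iff]
    rw [this]
    exact SimpleFunc.measurableSet_fiber _ _
  · intro y hy
    obtain ⟨k, hk, hyk⟩ : ∃ k ∈ t, y ∈ Metric.ball (e k) r := by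
      simpa using ht hy
    have h1 : edist (SimpleFunc.nearestPt e N y) y ≤ edist (e k) y :=
      SimpleFunc.edist_nearestPt_le e y (Finset.le_sup (f := id) hk)
    rw [edist_dist, edist_dist, ENNReal.ofReal_le_ofReal_iff dist_nonneg] at h1
    rw [Metric.mem_ball, dist_comm] at hyk
    exact lt_of_le_of_lt h1 hyk

/-- Every uniformly continuous probability density supported in the
compact set `W` can be approximated in `L²(ℝ^d)` by a mixture density from `P_φ`. -/
theorem mixture_dense_in_densities
    (d : ℕ) (W : Set (EuclideanSpace ℝ (Fin d))) (hW : IsCompact W)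
    (φ : EuclideanSpace ℝ (Fin d) → ℝ)
    (hφ_cont : Continuous φ) (hφ_supp : HasCompactSupport φ)
    (hφ_nonneg : ∀ w, 0 ≤ φ w) (hφ_int : (∫ w, φ w) = 1)
    (β η : ℝ) (hβ : 0 < β) (hη : 0 < η)
    (hφ_decay : ∀ w, φ w ≤ β * (1 + ‖w‖) ^ (-(d : ℝ) - η))
    (ρ : EuclideanSpace ℝ (Fin d) → ℝ)
    (hρ_uc : UniformContinuous ρ) (hρ_nonneg : ∀ w, 0 ≤ ρ w)
    (hρ_int : (∫ w, ρ w) = 1) (hρ_supp : ∀ w ∉ W, ρ w = 0) :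
    ∀ ε > (0 : ℝ), ∃ ρε : EuclideanSpace ℝ (Fin d) → ℝ,
      IsMixtureDensity φ ρε ∧
      (∫ w, (ρε w - ρ w) ^ 2) ^ ((1 : ℝ) / 2) < ε := by
  intro ε hε
  have hρc : Continuous ρ := hρ_uc.continuous
  have hρi : Integrable ρ := integrable_of_integral_eq_one hρ_int
  -- radii
  obtain ⟨A, hA0, hA⟩ : ∃ A : ℝ, 0 < A ∧ ∀ y ∈ W, ‖y‖ ≤ A := by
    obtain ⟨A, hA0, hA⟩ := hW.isBounded.exists_pos_norm_le
    exact ⟨A, hA0, hA⟩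
  obtain ⟨B, hB0, hB⟩ : ∃ B : ℝ, 0 < B ∧ ∀ u, φ u ≠ 0 → ‖u‖ ≤ B := by
    obtain ⟨B, hB0, hB⟩ := hφ_supp.isCompact.isBounded.exists_pos_norm_le
    exact ⟨B, hB0, fun u hu => hB u (subset_tsupport _ hu)⟩
  let K : Set (EuclideanSpace ℝ (Fin d)) := Metric.closedBall 0 (A + 1 + B)
  let V : ℝ := volume.real K
  have hV : 0 ≤ V := measureReal_nonneg
  let δ : ℝ := ε / (V + 1) / 2
  have hδ : 0 < δ := by positivity
  -- bandwidth
  obtain ⟨τ, hτ0, hτ⟩ := Metric.uniformContinuous_iff.1 hρ_uc δ hδ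
  obtain ⟨σ, hσ0, hσ1, hστ⟩ : ∃ σ : ℝ, 0 < σ ∧ σ ≤ 1 ∧ σ * B < τ := by
    refine ⟨min 1 (τ / (2 * B)), by positivity, min_le_left _ _, ?_⟩
    calc min 1 (τ / (2 * B)) * B ≤ (τ / (2 * B)) * B := by
          gcongr; exact min_le_right _ _
      _ = τ / 2 := by field_simp
      _ < τ := by linarith
  let ψ : EuclideanSpace ℝ (Fin d) → ℝ := fun u => (σ ^ d)⁻¹ * φ (σ⁻¹ • u)
  have hψc : Continuous ψ := by fun_prop
  have hψ0 : ∀ u, 0 ≤ ψ u := fun u => mul_nonneg (by positivity) (hφ_nonneg _)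
  have hψB : ∀ u, ψ u ≠ 0 → ‖u‖ ≤ σ * B := by
    intro u hu
    have h := hB _ (right_ne_zero_of_mul hu)
    rw [norm_smul, norm_inv, Real.norm_of_nonneg hσ0.le] at h
    rwa [inv_mul_le_iff₀ hσ0] at h
  have hψint : ∫ u, ψ u = 1 := by
    simp only [ψ]
    rw [integral_const_mul, Measure.integral_comp_inv_smul_of_nonneg _ _ hσ0.le, hφ_int]
    simp [hσ0.ne']
  have hψsupp : HasCompactSupport ψ := by
    refine HasCompactSupport.intro (isCompact_closedBall (0 : EuclideanSpace ℝ (Fin d)) (σ * B)) fun u hu => ?_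
    by_contra h
    exact hu (by simpa using hψB u h)
  have hψi : Integrable ψ := integrable_of_integral_eq_one hψint
  obtain ⟨r₀, hr₀, hψu⟩ := Metric.uniformContinuous_iff.1
    (hψsupp.uniformContinuous_of_continuous hψc) δ hδ
  -- net
  obtain ⟨n, hn, T, c, hT, hTc⟩ := exists_measurable_net (E := EuclideanSpace ℝ (Fin d)) hW
    (show 0 < min r₀ 1 by positivity)
  let μ : Measure (EuclideanSpace ℝ (Fin d)) := volume.withDensity (fun y => ENNReal.ofReal (ρ y))
  have hμint : ∀ g : EuclideanSpace ℝ (Fin d) → ℝ, ∫ y, g y ∂μ = ∫ y, ρ y * g y := by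
    intro g
    simp only [μ]
    rw [integral_withDensity_eq_integral_toReal_smul (by fun_prop) (by simp)]
    simp [ENNReal.toReal_ofReal (hρ_nonneg _)]
  have hμp : IsProbabilityMeasure μ := by
    refine ⟨?_⟩
    simp only [μ]
    rw [withDensity_apply _ MeasurableSet.univ, setLIntegral_univ,
      ← ofReal_integral_eq_lintegral_ofReal hρi (ae_of_all _ hρ_nonneg), hρ_int,
      ENNReal.ofReal_one]
  have hμW : ∀ᵐ y ∂μ, y ∈ W := by
    simp only [μ]
    rw [ae_withDensity_iff (by fun_prop)]
    refine ae_of_all _ fun y hy => ?_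
    by_contra h
    exact hy (by simp [hρ_supp y h])
  have hνp : IsProbabilityMeasure (μ.map T) := Measure.isProbabilityMeasure_map hT.aemeasurable
  let f : EuclideanSpace ℝ (Fin d) → ℝ := fun w => ∫ y, ψ (w - c (T y)) ∂μ
  have hfsum : ∀ w, f w = ∑ i, (μ.map T).real {i} * ψ (w - c i) := by
    intro w
    have h := integral_map (μ := μ) hT.aemeasurable
      (f := fun i => ψ (w - c i)) (measurable_of_finite _).aestronglyMeasurable
    simp only [f]
    rw [← h, integral_fintype .of_finite]
    simp
  obtain ⟨M, hM⟩ := hψsupp.exists_bound_of_continuous hψc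
  have hclose : ∀ w, |f w - ρ w| ≤ 2 * δ := by
    intro w
    have h1 : |f w - ∫ y, ψ (w - y) ∂μ| ≤ δ := by
      simp only [f]
      rw [← integral_sub, ← Real.norm_eq_abs]
      · refine (norm_integral_le_of_norm_le_const (C := δ) ?_).trans (by simp)
        filter_upwards [hμW] with y hy
        rw [← dist_eq_norm]
        refine (hψu ?_).le
        rw [dist_sub_left]
        exact (hTc y hy).trans_le (min_le_left _ _)
      · refine Integrable.of_bound (C := M) ?_ (ae_of_all _ fun y => hM _)
        have hcT : Measurable (fun y => c (T y)) := (measurable_of_finite c).comp hT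
        exact (hψc.measurable.comp (measurable_const.sub hcT)).aestronglyMeasurable
      · exact Integrable.of_bound (C := M) (by fun_prop) (ae_of_all _ fun y => hM _)
    have h2 : |(∫ y, ψ (w - y) ∂μ) - ρ w| ≤ δ := by
      have hi1 : Integrable (fun y => ψ (w - y)) := hψi.comp_sub_left w
      have hI1 : ∫ y, ψ (w - y) = 1 := by rw [integral_sub_left_eq_self ψ volume w, hψint]
      have hi2 : Integrable (fun y => ρ y * ψ (w - y)) :=
        hρi.mul_bdd (c := M) (by fun_prop) (ae_of_all _ fun y => hM _)
      have e1 : ρ w = ∫ y, ρ w * ψ (w - y) := by rw [integral_const_mul, hI1, mul_one]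
      rw [hμint, e1, ← integral_sub hi2 (hi1.const_mul _), ← Real.norm_eq_abs]
      calc _ ≤ ∫ y, δ * ψ (w - y) := by
            refine norm_integral_le_of_norm_le (hi1.const_mul δ) (ae_of_all _ fun y => ?_)
            rw [← sub_mul, norm_mul, Real.norm_of_nonneg (hψ0 _)]
            by_cases h : ψ (w - y) = 0
            · simp [h]
            · refine mul_le_mul_of_nonneg_right ?_ (hψ0 _)
              rw [← dist_eq_norm]
              refine (hτ ?_).le
              rw [dist_comm, dist_eq_norm]
              exact (hψB _ h).trans_lt hστ
        _ = δ := by rw [integral_const_mul, hI1, mul_one]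
    calc |f w - ρ w| ≤ |f w - ∫ y, ψ (w - y) ∂μ| + |(∫ y, ψ (w - y) ∂μ) - ρ w| :=
          abs_sub_le _ _ _
      _ ≤ 2 * δ := by linarith
  have hout : ∀ w, w ∉ K → (f w - ρ w) ^ 2 = 0 := by
    intro w hw
    have hw' : A + 1 + B < ‖w‖ := by simpa [K] using hw
    have h1 : ρ w = 0 := hρ_supp w fun h => by linarith [hA w h]
    have h2 : f w = 0 := by
      refine integral_eq_zero_of_ae ?_
      filter_upwards [hμW] with y hy
      by_contra h
      have h3 : ‖w - c (T y)‖ ≤ σ * B := hψB _ h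
      have h4 : ‖c (T y) - y‖ < 1 := by
        rw [← dist_eq_norm]; exact (hTc y hy).trans_le (min_le_right _ _)
      have h5 := hA y hy
      have h6 : σ * B ≤ B := by nlinarith
      have h7 : ‖w‖ ≤ ‖w - c (T y)‖ + ‖c (T y) - y‖ + ‖y‖ := by
        calc ‖w‖ = ‖(w - c (T y)) + (c (T y) - y) + y‖ := by congr 1; abel
          _ ≤ _ := norm_add₃_le
      linarith
    simp [h1, h2]
  refine ⟨f, ⟨n, hn, fun i => (μ.map T).real {i}, c, fun _ => σ, fun i => measureReal_nonneg,
    ?_, fun _ => ⟨hσ0, hσ1⟩, hfsum⟩, ?_⟩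
  · rw [sum_measureReal_singleton]
    simp
  · have hsq : ∫ w, (f w - ρ w) ^ 2 ≤ (2 * δ) ^ 2 * V := by
      rw [← setIntegral_eq_integral_of_forall_compl_eq_zero hout]
      refine (le_abs_self _).trans ?_
      rw [← Real.norm_eq_abs]
      refine norm_setIntegral_le_of_norm_le_const (isCompact_closedBall _ _).measure_lt_top ?_
      intro w _
      rw [Real.norm_of_nonneg (sq_nonneg _), ← sq_abs]
      exact pow_le_pow_left₀ (abs_nonneg _) (hclose w) 2
    have hlt : (2 * δ) ^ 2 * V < ε ^ 2 := by
      have : 2 * δ = ε / (V + 1) := by simp only [δ]; ring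
      rw [this, div_pow, div_mul_eq_mul_div, div_lt_iff₀ (by positivity)]
      have : 0 < ε ^ 2 := by positivity
      exact mul_lt_mul_of_pos_left (by nlinarith) this
    rw [← Real.sqrt_eq_rpow, Real.sqrt_lt' hε]
    exact hsq.trans_lt hlt
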